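/- Let G be a bipartite distance-regular graph of diameter 3 with intersection array {k, k−1, k−c₂; 1, c₂, k}, and let q be a real number with q > 0 or q ≤ −1. Then the q-distance matrix 𝔻_q has exactly three distinct eigenvalues if and only if q = (k + θ)/c₂ − 1 for some θ ∈ {√(k−c₂), −√(k−c₂), −k}. -/

import Mathlib

open Matrix

variable {V : Type*} [Fintype V] [DecidableEq V]

/-- The distance-`i` matrix of a graph: the `(x,y)` entry is 1 if `dist x y = i`, else 0. -/
noncomputable def distM (G : SimpleGraph V) (i : ℕ) : Matrix V V ℝ :=
  Matrix.of fun x y => if G.dist x y = i then (1 : ℝ) else 0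

/-- The `q`-distance matrix `𝔻_q = ∑_{i=1}^D (1 + 1/q + ⋯ + 1/q^{i-1}) • A_i`. -/
noncomputable def qDist (G : SimpleGraph V) (D : ℕ) (q : ℝ) : Matrix V V ℝ :=
  ∑ i ∈ Finset.Icc 1 D, (∑ j ∈ Finset.range i, (1 / q) ^ j) • distM G i

/-- `G` is distance-regular with diameter `D` and intersection numbers `b i`, `c i`
(with `c 1 = 1`): for any vertices `x, y` at distance `i ≤ D`, the number of neighbors
of `y` at distance `i - 1` from `x` is `c i` and the number of neighbors of `y` at
distance `i + 1` from `x` is `b i`. -/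
def IsDRG (G : SimpleGraph V) (D : ℕ) (b c : ℕ → ℕ) : Prop :=
  G.Connected ∧
  (∀ x y : V, G.dist x y ≤ D) ∧
  (∃ x y : V, G.dist x y = D) ∧
  c 1 = 1 ∧
  ∀ i ≤ D, ∀ x y : V, G.dist x y = i →
    ({z : V | G.Adj y z ∧ G.dist x z = i - 1} : Set V).ncard = c i ∧
    ({z : V | G.Adj y z ∧ G.dist x z = i + 1} : Set V).ncard = b i

/-- `a i = k - b i - c i` as a real number, where `k = b 0`. -/
noncomputable def aInt (b c : ℕ → ℕ) (i : ℕ) : ℝ := (b 0 : ℝ) - (b i : ℝ) - (c i : ℝ)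

/-- `G` is bipartite: the vertex set can be split into two parts such that every edge has
one endpoint in each part. -/
def IsBipartiteGraph (G : SimpleGraph V) : Prop :=
  ∃ S : Set V, ∀ x y : V, G.Adj x y → (x ∈ S ↔ y ∉ S)

/-!
The matrix `A_i` is a polynomial `v_i` in the adjacency matrix `A`, because a neighbour of `y` is at
distance `d(x, y) - 1`, `d(x, y)` or `d(x, y) + 1` from `x`, which gives a three-term recurrence.
Hence `𝔻_q = p(A)`, and the spectrum of `𝔻_q` is the image under `p` of the spectrum of `A`. The
latter consists of the roots of any annihilating polynomial of degree `D + 1`: powers of `A` count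
walks, so no polynomial of degree at most `D` annihilates `A`. For `D = 3` in the bipartite case
this polynomial is `(X - k)(X - s)(X + s)(X + k)` with `s = √(k - c₂)`.

The value `p(k)` is strictly larger than the other three, so `𝔻_q` has three eigenvalues exactly
when precisely one coincidence occurs among `p(-k)`, `p(s)` and `p(-s)`. Each coincidence is a
linear condition on `q`: `q = (k - s)/c₂ - 1`, `q = (k + s)/c₂ - 1` and `q = -1` respectively. The
first two are incompatible, hence so are all three together.
-/

open Polynomial

theorem ncard_triple_eq_two_iff {α : Type*} {x y z : α} :
    ({x, y, z} : Set α).ncard = 2 ↔ (x = y ∨ x = z ∨ y = z) ∧ ¬(x = y ∧ x = z) := by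
  classical
  have hcoe : ({x, y, z} : Set α) = (({x, y, z} : Finset α) : Set α) := by simp
  rw [hcoe, Set.ncard_coe_finset]
  grind

section Spectrum

variable {ι : Type*} [Fintype ι] [DecidableEq ι]

theorem mem_spectrum_iff_isRoot_minpoly {K : Type*} [Field K] (M : Matrix ι ι K) (μ : K) :
    μ ∈ spectrum K M ↔ (minpoly K M).IsRoot μ := by
  rw [← Matrix.spectrum_toLin', ← Matrix.minpoly_toLin', ← Module.End.hasEigenvalue_iff_isRoot,
    Module.End.hasEigenvalue_iff_mem_spectrum]

theorem spectrum_aeval_of_isSelfAdjoint {M : Matrix ι ι ℝ} (hM : IsSelfAdjoint M) (p : ℝ[X]) :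
    spectrum ℝ (aeval M p) = p.eval '' spectrum ℝ M := by
  rw [← cfc_polynomial p M hM, cfc_map_spectrum p.eval M hM p.continuousOn]

end Spectrum

section Distance

variable {W : Type*} {G : SimpleGraph W} {x y z : W}

theorem dist_getVert_of_length_eq_dist {p : G.Walk x y} (hp : p.length = G.dist x y) {i : ℕ}
    (hi : i ≤ p.length) : G.dist x (p.getVert i) = i := by
  rw [← SimpleGraph.length_eq_dist_of_subwalk hp (p.isSubwalk_take i), p.take_length,
    min_eq_left hi]

theorem exists_adj_dist_eq_of_lt_dist (hxy : G.Reachable x y) {i : ℕ} (hi : i < G.dist x y) :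
    ∃ u v, G.Adj u v ∧ G.dist x u = i ∧ G.dist x v = i + 1 := by
  obtain ⟨p, hp⟩ := hxy.exists_walk_length_eq_dist
  exact ⟨p.getVert i, p.getVert (i + 1), p.adj_getVert_succ (by lia),
    dist_getVert_of_length_eq_dist hp (by lia), dist_getVert_of_length_eq_dist hp (by lia)⟩

theorem dist_eq_or_eq_or_eq_of_adj (h : G.Adj y z) :
    G.dist x z + 1 = G.dist x y ∨ G.dist x z = G.dist x y ∨ G.dist x z = G.dist x y + 1 := by
  have := h.diff_dist_adj (u := x)
  have := h.symm.diff_dist_adj (u := x)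
  lia

end Distance

section AdjMatrix

variable {K W : Type*} [Fintype W] [DecidableEq W] {G : SimpleGraph W} [DecidableRel G.Adj]
  {x y : W}

theorem adjMatrix_pow_apply_eq_zero_of_lt_dist [Semiring K] {n : ℕ} (h : n < G.dist x y) :
    (G.adjMatrix K ^ n) x y = 0 := by
  rw [SimpleGraph.adjMatrix_pow_apply_eq_card_walk]
  have : IsEmpty {p : G.Walk x y | p.length = n} :=
    ⟨fun ⟨p, hp⟩ => (SimpleGraph.dist_le p).not_gt (hp ▸ h)⟩
  rw [Fintype.card_eq_zero, Nat.cast_zero]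

theorem adjMatrix_pow_dist_apply_ne_zero [Semiring K] [CharZero K] (hxy : G.Reachable x y) :
    (G.adjMatrix K ^ G.dist x y) x y ≠ 0 := by
  rw [SimpleGraph.adjMatrix_pow_apply_eq_card_walk, Nat.cast_ne_zero]
  obtain ⟨p, hp⟩ := hxy.exists_walk_length_eq_dist
  have : Nonempty {p : G.Walk x y | p.length = G.dist x y} := ⟨⟨p, hp⟩⟩
  exact Fintype.card_ne_zero

theorem aeval_adjMatrix_apply_of_natDegree_le_dist [CommSemiring K] {p : K[X]}
    (hp : p.natDegree ≤ G.dist x y) :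
    aeval (G.adjMatrix K) p x y =
      p.coeff (G.dist x y) * (G.adjMatrix K ^ G.dist x y) x y := by
  rw [aeval_eq_sum_range' (Nat.lt_succ_of_le hp), Matrix.sum_apply, Finset.sum_range_succ,
    Finset.sum_eq_zero fun i hi => ?_, zero_add, Matrix.smul_apply, smul_eq_mul]
  rw [Matrix.smul_apply, adjMatrix_pow_apply_eq_zero_of_lt_dist (Finset.mem_range.1 hi), smul_zero]

theorem dist_lt_natDegree_minpoly_adjMatrix [Field K] [CharZero K] (hxy : G.Reachable x y) :
    G.dist x y < (minpoly K (G.adjMatrix K)).natDegree := by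
  by_contra! hle
  have hint := Matrix.isIntegral (R := K) (G.adjMatrix K)
  -- Shifting by a power of `X` makes the degree equal to `dist x y`, so only walks of that length
  -- contribute to the `(x, y)` entry.
  set r := minpoly K (G.adjMatrix K) * X ^ (G.dist x y - (minpoly K (G.adjMatrix K)).natDegree)
  have hmonic : r.Monic := (minpoly.monic hint).mul (monic_X_pow _)
  have hdeg : r.natDegree = G.dist x y := by
    rw [(minpoly.monic hint).natDegree_mul (monic_X_pow _), natDegree_X_pow]
    lia
  have hentry := aeval_adjMatrix_apply_of_natDegree_le_dist hdeg.le
  rw [← hdeg, hmonic.coeff_natDegree, hdeg, map_mul, minpoly.aeval, zero_mul, Matrix.zero_apply,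
    one_mul] at hentry
  exact adjMatrix_pow_dist_apply_ne_zero hxy hentry.symm

theorem mem_spectrum_adjMatrix_iff_isRoot [Field K] [CharZero K] (hxy : G.Reachable x y) {p : K[X]}
    (hp : p.Monic) (hdeg : p.natDegree ≤ G.dist x y + 1)
    (hzero : aeval (G.adjMatrix K) p = 0) {μ : K} :
    μ ∈ spectrum K (G.adjMatrix K) ↔ p.IsRoot μ := by
  have hmin : p = minpoly K (G.adjMatrix K) :=
    eq_of_monic_of_dvd_of_natDegree_le (minpoly.monic (Matrix.isIntegral _)) hp
      (minpoly.dvd _ _ hzero) (hdeg.trans (dist_lt_natDegree_minpoly_adjMatrix hxy))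
  rw [hmin, mem_spectrum_iff_isRoot_minpoly]

end AdjMatrix

namespace IsDRG

variable {W : Type*} {G : SimpleGraph W} {D : ℕ} {b c : ℕ → ℕ} {x y : W} {i : ℕ}

theorem connected (h : IsDRG G D b c) : G.Connected :=
  h.1

theorem dist_le (h : IsDRG G D b c) (x y : W) : G.dist x y ≤ D :=
  h.2.1 x y

theorem exists_dist_eq (h : IsDRG G D b c) : ∃ x y, G.dist x y = D :=
  h.2.2.1

theorem c_one (h : IsDRG G D b c) : c 1 = 1 :=
  h.2.2.2.1

theorem ncard_adj_dist_eq_pred (h : IsDRG G D b c) (hxy : G.dist x y = i + 1) :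
    {z | G.Adj y z ∧ G.dist x z = i}.ncard = c (i + 1) :=
  (h.2.2.2.2 (i + 1) (hxy ▸ h.dist_le x y) x y hxy).1

theorem ncard_adj_dist_eq_succ (h : IsDRG G D b c) (hxy : G.dist x y = i) :
    {z | G.Adj y z ∧ G.dist x z = i + 1}.ncard = b i :=
  (h.2.2.2.2 i (hxy ▸ h.dist_le x y) x y hxy).2

theorem ncard_adj (h : IsDRG G D b c) (y : W) : {z | G.Adj y z}.ncard = b 0 := by
  rw [← h.ncard_adj_dist_eq_succ (SimpleGraph.dist_self (v := y))]
  simp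

theorem b_diam (h : IsDRG G D b c) : b D = 0 := by
  obtain ⟨x, y, hxy⟩ := h.exists_dist_eq
  rw [← h.ncard_adj_dist_eq_succ hxy, ← Set.ncard_empty W]
  congr 1
  exact Set.eq_empty_of_forall_notMem fun z hz => absurd (h.dist_le x z) (by grind)

theorem ncard_adj_dist_eq_self [Finite W] (h : IsDRG G D b c) (hxy : G.dist x y = i + 1) :
    ({z | G.Adj y z ∧ G.dist x z = i + 1}.ncard : ℝ) = aInt b c (i + 1) := by
  have hsplit : {z | G.Adj y z} = {z | G.Adj y z ∧ G.dist x z = i} ∪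
      ({z | G.Adj y z ∧ G.dist x z = i + 1} ∪ {z | G.Adj y z ∧ G.dist x z = i + 1 + 1}) := by
    ext z
    have := fun hz : G.Adj y z => dist_eq_or_eq_or_eq_of_adj (x := x) hz
    grind
  have hcard := h.ncard_adj y
  rw [hsplit, Set.ncard_union_eq (Set.disjoint_left.2 (by grind)),
    Set.ncard_union_eq (Set.disjoint_left.2 (by grind)), h.ncard_adj_dist_eq_pred hxy,
    h.ncard_adj_dist_eq_succ hxy] at hcard
  rw [aInt, ← hcard]
  push_cast
  ring

theorem b_pos [Finite W] (h : IsDRG G D b c) (hi : i < D) : 0 < b i := by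
  obtain ⟨x, y, hxy⟩ := h.exists_dist_eq
  obtain ⟨u, v, huv, hu, hv⟩ := exists_adj_dist_eq_of_lt_dist (h.connected x y) (hxy ▸ hi)
  rw [← h.ncard_adj_dist_eq_succ hu, Set.ncard_pos]
  exact ⟨v, huv, hv⟩

theorem c_succ_pos [Finite W] (h : IsDRG G D b c) (hi : i < D) : 0 < c (i + 1) := by
  obtain ⟨x, y, hxy⟩ := h.exists_dist_eq
  obtain ⟨u, v, huv, hu, hv⟩ := exists_adj_dist_eq_of_lt_dist (h.connected x y) (hxy ▸ hi)
  rw [← h.ncard_adj_dist_eq_pred hv, Set.ncard_pos]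
  exact ⟨u, huv.symm, hu⟩

end IsDRG

section DistanceMatrix

variable {W : Type*} {G : SimpleGraph W} {D : ℕ} {b c : ℕ → ℕ} {x y : W} {i : ℕ}

theorem distM_zero [DecidableEq W] (hG : G.Connected) : distM G 0 = 1 := by
  ext x y
  simp [distM, Matrix.one_apply, hG.dist_eq_zero_iff]

theorem distM_one [DecidableRel G.Adj] : distM G 1 = G.adjMatrix ℝ := by
  ext x y
  simp [distM]

theorem distM_eq_zero_of_lt (hD : ∀ x y, G.dist x y ≤ D) (hi : D < i) : distM G i = 0 := by
  ext x y
  simp [distM, ((hD x y).trans_lt hi).ne]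

theorem distM_mul_adjMatrix_apply [Fintype W] [DecidableRel G.Adj] (x y : W) :
    (distM G i * G.adjMatrix ℝ) x y = {z | G.Adj y z ∧ G.dist x z = i}.ncard := by
  simp only [SimpleGraph.mul_adjMatrix_apply, distM, Matrix.of_apply, Finset.sum_boole]
  rw [← Set.ncard_coe_finset]
  congr 2
  ext z
  simp

theorem IsDRG.distM_succ_mul_adjMatrix [Fintype W] [DecidableRel G.Adj] (h : IsDRG G D b c)
    (i : ℕ) :
    distM G (i + 1) * G.adjMatrix ℝ =
      (b i : ℝ) • distM G i + aInt b c (i + 1) • distM G (i + 1) +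
        (c (i + 2) : ℝ) • distM G (i + 2) := by
  ext x y
  rw [distM_mul_adjMatrix_apply]
  simp only [distM, Matrix.add_apply, Matrix.smul_apply, Matrix.of_apply, smul_eq_mul]
  by_cases hi : G.dist x y = i
  · simp [hi, h.ncard_adj_dist_eq_succ]
  by_cases hi₁ : G.dist x y = i + 1
  · simp [hi₁, h.ncard_adj_dist_eq_self]
  by_cases hi₂ : G.dist x y = i + 2
  · simp [hi₂, h.ncard_adj_dist_eq_pred]
  have hempty : {z | G.Adj y z ∧ G.dist x z = i + 1} = ∅ := by
    refine Set.eq_empty_of_forall_notMem fun z hz => ?_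
    have := dist_eq_or_eq_or_eq_of_adj (x := x) hz.1
    grind
  simp [hi, hi₁, hi₂, hempty]

end DistanceMatrix

section DistancePolynomial

/-- The distance polynomials `v₀, v₁, …` of an intersection array, determined by
`X v_{i+1} = b_i v_i + a_{i+1} v_{i+1} + c_{i+2} v_{i+2}`. Only `v₀, …, v_D` are meaningful:
beyond the diameter the recursion may divide by `c (i + 2) = 0`. -/
noncomputable def distPoly (b c : ℕ → ℕ) : ℕ → ℝ[X]
  | 0 => 1
  | 1 => X
  | i + 2 => C (c (i + 2) : ℝ)⁻¹ *
      ((X - C (aInt b c (i + 1))) * distPoly b c (i + 1) - C (b i : ℝ) * distPoly b c i)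

/-- The polynomial in the adjacency matrix which gives the `q`-distance matrix. -/
noncomputable def qDistPoly (b c : ℕ → ℕ) (D : ℕ) (q : ℝ) : ℝ[X] :=
  ∑ i ∈ Finset.Icc 1 D, (∑ j ∈ Finset.range i, (1 / q) ^ j) • distPoly b c i

namespace IsDRG

variable {W : Type*} [Fintype W] [DecidableEq W] {G : SimpleGraph W} [DecidableRel G.Adj] {D : ℕ}
  {b c : ℕ → ℕ}

theorem aeval_distPoly (h : IsDRG G D b c) :
    ∀ {i : ℕ}, i ≤ D → aeval (G.adjMatrix ℝ) (distPoly b c i) = distM G i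
  | 0, _ => by simp [distPoly, distM_zero h.connected]
  | 1, _ => by simp [distPoly, distM_one]
  | i + 2, hi => by
    have hc : (c (i + 2) : ℝ) ≠ 0 := by exact_mod_cast (h.c_succ_pos hi).ne'
    have hrec : (c (i + 2) : ℝ) • distM G (i + 2) =
        distM G (i + 1) * G.adjMatrix ℝ - aInt b c (i + 1) • distM G (i + 1) -
          (b i : ℝ) • distM G i := by
      rw [h.distM_succ_mul_adjMatrix]
      module
    rw [distPoly, mul_comm (X - _), mul_sub _ X, ← inv_smul_smul₀ hc (distM G (i + 2)), hrec]
    simp only [← smul_eq_C_mul, mul_comm _ (C _), map_smul, map_sub, map_mul, aeval_X,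
      h.aeval_distPoly (show i ≤ D by lia), h.aeval_distPoly (show i + 1 ≤ D by lia)]

theorem aeval_distPoly_recurrence_eq_zero (h : IsDRG G (D + 1) b c) :
    aeval (G.adjMatrix ℝ)
      ((X - C (aInt b c (D + 1))) * distPoly b c (D + 1) - C (b D : ℝ) * distPoly b c D) = 0 := by
  have hrec := h.distM_succ_mul_adjMatrix D
  rw [distM_eq_zero_of_lt h.dist_le (Nat.lt_succ_self (D + 1)), smul_zero, add_zero] at hrec
  rw [mul_comm (X - _), mul_sub _ X]
  simp only [mul_comm _ (C _), ← smul_eq_C_mul, map_sub, map_smul, map_mul, aeval_X,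
    h.aeval_distPoly le_rfl, h.aeval_distPoly D.le_succ, hrec]
  module

theorem aeval_qDistPoly (h : IsDRG G D b c) (q : ℝ) :
    aeval (G.adjMatrix ℝ) (qDistPoly b c D q) = qDist G D q := by
  simp only [qDistPoly, qDist, map_sum, map_smul]
  exact Finset.sum_congr rfl fun i hi => by rw [h.aeval_distPoly (Finset.mem_Icc.1 hi).2]

theorem spectrum_qDist (h : IsDRG G D b c) (q : ℝ) :
    spectrum ℝ (qDist G D q) = (qDistPoly b c D q).eval '' spectrum ℝ (G.adjMatrix ℝ) := by
  rw [← h.aeval_qDistPoly,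
    spectrum_aeval_of_isSelfAdjoint (SimpleGraph.isHermitian_adjMatrix ℝ G).isSelfAdjoint]

end IsDRG

end DistancePolynomial

section Eigenvalues

/-- The eigenvalue of `𝔻_q` on the `x`-eigenspace of the adjacency matrix, for the intersection
array `{k, k−1, k−c; 1, c, k}`: the coefficients of `1`, `1 + 1/q` and `1 + 1/q + 1/q²` are the
distance polynomials `v₁`, `v₂` and `v₃`. -/
noncomputable def qDistEigenvalue (k c q x : ℝ) : ℝ :=
  x + (1 + 1 / q) * ((x ^ 2 - k) / c) +
    (1 + 1 / q + (1 / q) ^ 2) * ((x * ((x ^ 2 - k) / c) - (k - 1) * x) / k)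

variable {k c q x : ℝ}

theorem qDistEigenvalue_of_sq_eq (hc : c ≠ 0) (hk : k ≠ 0) (hx : x ^ 2 = k - c) :
    qDistEigenvalue k c q x = -(1 + 1 / q) * (1 + 1 / q * x) := by
  have hv₂ : (x ^ 2 - k) / c = -1 := by
    rw [hx]
    field_simp
    ring
  have hv₃ : (x * (-1) - (k - 1) * x) / k = -x := by
    field_simp
    ring
  rw [qDistEigenvalue, hv₂, hv₃]
  ring

theorem qDistEigenvalue_of_sq_eq_sq (hk : k ≠ 0) (hx : x ^ 2 = k ^ 2) :
    qDistEigenvalue k c q x =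
      x + (1 + 1 / q) * ((k ^ 2 - k) / c) +
        (1 + 1 / q + (1 / q) ^ 2) * (x / k * ((k ^ 2 - k) / c - (k - 1))) := by
  rw [qDistEigenvalue, hx]
  field_simp

theorem qDistEigenvalue_neg_lt (hc : 0 < c) (hck : c + 1 ≤ k) :
    qDistEigenvalue k c q (-k) < qDistEigenvalue k c q k := by
  have hk : 0 < k := by linarith
  have hv₃ : 0 ≤ (k ^ 2 - k) / c - (k - 1) := by
    rw [sub_nonneg, le_div_iff₀ hc]
    nlinarith
  have hcoeff : 0 ≤ 1 + 1 / q + (1 / q) ^ 2 := by nlinarith [sq_nonneg (2 * (1 / q) + 1)]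
  rw [qDistEigenvalue_of_sq_eq_sq hk.ne' (neg_sq k), qDistEigenvalue_of_sq_eq_sq hk.ne' rfl,
    neg_div, div_self hk.ne']
  linarith [mul_nonneg hcoeff hv₃]

theorem sub_le_one_add_div_of_sq_eq (hc : 1 ≤ c) (hck : c + 1 ≤ k) (hx : x ^ 2 = k - c) :
    k - x ≤ 1 + (k ^ 2 - k) / c := by
  have hc₀ : 0 < c := by linarith
  have hxx : 0 ≤ x * (x + 1) := by
    rcases le_abs.1 ((one_le_sq_iff_one_le_abs x).1 (by linarith)) with hx₁ | hx₁ <;> nlinarith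
  have hkx : x ≤ k := abs_le_of_sq_le_sq' (by nlinarith) (by linarith) |>.2
  refine le_of_mul_le_mul_right ?_ hc₀
  calc (k - x) * c ≤ (k - x) * (k + x) := mul_le_mul_of_nonneg_left (by linarith) (by linarith)
    _ = (1 + (k ^ 2 - k) / c) * c := by
      field_simp
      linear_combination -hx

theorem qDistEigenvalue_lt_of_sq_eq (hc : 1 ≤ c) (hck : c + 1 ≤ k) (hq : 0 < q ∨ q ≤ -1)
    (hx : x ^ 2 = k - c) : qDistEigenvalue k c q x < qDistEigenvalue k c q k := by
  have hc₀ : 0 < c := by linarith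
  have hk : 0 < k := by linarith
  have hxk : x < k := abs_lt_of_sq_lt_sq' (by nlinarith) hk.le |>.2
  have hxm := sub_le_one_add_div_of_sq_eq hc hck hx
  -- Half the number of vertices of the graph.
  set m := 1 + (k ^ 2 - k) / c with hm
  have hm₀ : 0 < m := by linarith
  have hdiff : qDistEigenvalue k c q k - qDistEigenvalue k c q x =
      m * (1 + (1 + 1 / q) ^ 2) - (1 / q + (1 / q) ^ 2) * (k - x) := by
    rw [qDistEigenvalue_of_sq_eq hc₀.ne' hk.ne' hx, qDistEigenvalue_of_sq_eq_sq hk.ne' rfl,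
      div_self hk.ne', hm]
    ring
  rw [← sub_pos, hdiff, sub_pos]
  rcases hq with hq | hq
  · have ht : 0 < 1 / q := by positivity
    calc (1 / q + (1 / q) ^ 2) * (k - x) ≤ (1 / q + (1 / q) ^ 2) * m := by gcongr
      _ < m * (1 + (1 + 1 / q) ^ 2) := by nlinarith
  · have hq₀ : q < 0 := by linarith
    have ht : 1 / q < 0 := one_div_neg.2 hq₀
    have ht₁ : -1 ≤ 1 / q := by
      rw [le_div_iff_of_neg hq₀]
      linarith
    calc (1 / q + (1 / q) ^ 2) * (k - x) = 1 / q * ((1 + 1 / q) * (k - x)) := by ring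
      _ ≤ 0 := mul_nonpos_of_nonpos_of_nonneg ht.le (mul_nonneg (by linarith) (by linarith))
      _ < m * (1 + (1 + 1 / q) ^ 2) := by positivity

theorem qDistEigenvalue_neg_self_eq_iff (hc : c ≠ 0) (hk : k ≠ 0) (hq : q ≠ 0) (hx : x ^ 2 = k - c)
    (hxk : k + x ≠ 0) :
    qDistEigenvalue k c q (-k) = qDistEigenvalue k c q x ↔ q = (k - x) / c - 1 := by
  have hdiff : qDistEigenvalue k c q (-k) - qDistEigenvalue k c q x =
      (k + x) * ((q + 1) * c - (k - x)) / (q ^ 2 * c) := by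
    rw [qDistEigenvalue_of_sq_eq hc hk hx, qDistEigenvalue_of_sq_eq_sq hk (neg_sq k)]
    field_simp
    linear_combination -hx
  rw [← sub_eq_zero, hdiff, div_eq_zero_iff, mul_eq_zero, or_iff_right hxk,
    or_iff_left (by positivity), sub_eq_zero, eq_sub_iff_add_eq (b := _ / c), eq_div_iff hc]

theorem qDistEigenvalue_eq_neg_iff (hc : c ≠ 0) (hk : k ≠ 0) (hq : q ≠ 0) (hx : x ^ 2 = k - c)
    (hx₀ : x ≠ 0) : qDistEigenvalue k c q x = qDistEigenvalue k c q (-x) ↔ q = -1 := by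
  have hdiff : qDistEigenvalue k c q x - qDistEigenvalue k c q (-x) =
      -2 * x * (q + 1) / q ^ 2 := by
    rw [qDistEigenvalue_of_sq_eq hc hk hx, qDistEigenvalue_of_sq_eq hc hk ((neg_sq x).trans hx)]
    field_simp
    ring
  rw [← sub_eq_zero, hdiff, div_eq_zero_iff, or_iff_left (by positivity), mul_eq_zero,
    or_iff_right (by simpa using hx₀), add_eq_zero_iff_eq_neg]

theorem ncard_qDistEigenvalue_image_eq_three_iff {s : ℝ} (hc : 1 ≤ c) (hck : c + 1 ≤ k)
    (hq : 0 < q ∨ q ≤ -1) (hs : s ^ 2 = k - c) :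
    (qDistEigenvalue k c q '' {k, s, -s, -k}).ncard = 3 ↔
      ∃ θ ∈ ({s, -s, -k} : Set ℝ), q = (k + θ) / c - 1 := by
  have hc₀ : 0 < c := by linarith
  have hk₀ : 0 < k := by linarith
  have hq₀ : q ≠ 0 := by grind
  have hs₀ : s ≠ 0 := by rintro rfl; linarith
  obtain ⟨hks, hsk⟩ : -k < s ∧ s < k := abs_lt_of_sq_lt_sq' (by nlinarith) hk₀.le
  have hs' : (-s) ^ 2 = k - c := (neg_sq s).trans hs
  have hmax : qDistEigenvalue k c q k ∉
      ({qDistEigenvalue k c q (-k), qDistEigenvalue k c q s,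
        qDistEigenvalue k c q (-s)} : Set ℝ) := by
    simp [(qDistEigenvalue_neg_lt hc₀ hck).ne', (qDistEigenvalue_lt_of_sq_eq hc hck hq hs).ne',
      (qDistEigenvalue_lt_of_sq_eq hc hck hq hs').ne']
  have hperm : ({k, s, -s, -k} : Set ℝ) = {k, -k, s, -s} := by grind
  have hne : (k - s) / c ≠ (k + s) / c := by
    rw [Ne, div_left_inj' hc₀.ne']
    grind
  rw [hperm, Set.image_insert_eq, Set.image_insert_eq, Set.image_pair,
    Set.ncard_insert_of_notMem hmax, Nat.succ_inj (b := 2), ncard_triple_eq_two_iff,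
    qDistEigenvalue_neg_self_eq_iff hc₀.ne' hk₀.ne' hq₀ hs (by linarith),
    qDistEigenvalue_neg_self_eq_iff hc₀.ne' hk₀.ne' hq₀ hs' (by linarith),
    qDistEigenvalue_eq_neg_iff hc₀.ne' hk₀.ne' hq₀ hs hs₀]
  simp only [Set.mem_insert_iff, Set.mem_singleton_iff, exists_eq_or_imp, exists_eq_left,
    sub_neg_eq_add, ← sub_eq_add_neg, sub_self, zero_div, zero_sub]
  grind

end Eigenvalues

section BipartiteDiameterThree

/-- The intersection numbers `b`, `c` are those of the array `{k, k−1, k−c₂; 1, c₂, k}`, with the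
differences taken in `ℝ`. -/
structure IsBipartiteArrayThree (b c : ℕ → ℕ) (k c₂ : ℝ) : Prop where
  b_zero : b 0 = k
  b_one : b 1 = k - 1
  b_two : b 2 = k - c₂
  c_one : (c 1 : ℝ) = 1
  c_two : c 2 = c₂
  c_three : c 3 = k

namespace IsBipartiteArrayThree

variable {b c : ℕ → ℕ} {k c₂ : ℝ}

theorem eval_distPoly_two (h : IsBipartiteArrayThree b c k c₂) (x : ℝ) :
    (distPoly b c 2).eval x = (x ^ 2 - k) / c₂ := by
  simp only [distPoly, aInt, h.b_zero, h.b_one, h.c_one, h.c_two, eval_mul, eval_sub, eval_C,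
    eval_X, eval_one]
  ring

theorem eval_distPoly_three (h : IsBipartiteArrayThree b c k c₂) (x : ℝ) :
    (distPoly b c 3).eval x = (x * ((x ^ 2 - k) / c₂) - (k - 1) * x) / k := by
  rw [distPoly, eval_mul, eval_sub, eval_mul, h.eval_distPoly_two]
  simp only [distPoly, aInt, h.b_zero, h.b_one, h.b_two, h.c_two, h.c_three, eval_mul, eval_sub,
    eval_C, eval_X]
  ring

theorem eval_qDistPoly (h : IsBipartiteArrayThree b c k c₂) (q x : ℝ) :
    (qDistPoly b c 3 q).eval x = qDistEigenvalue k c₂ q x := by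
  have hone : (distPoly b c 1).eval x = x := eval_X
  rw [qDistPoly, eval_finsetSum, Finset.sum_Icc_succ_top (by lia),
    Finset.sum_Icc_succ_top (by lia), Finset.Icc_self, Finset.sum_singleton]
  simp only [eval_smul, hone, h.eval_distPoly_two, h.eval_distPoly_three, Finset.sum_range_succ,
    Finset.sum_range_zero, smul_eq_mul, qDistEigenvalue]
  ring

theorem prod_X_sub_C_eq (h : IsBipartiteArrayThree b c k c₂) (hb : b 3 = 0) (hk : k ≠ 0)
    (hc : c₂ ≠ 0) {s : ℝ} (hs : s ^ 2 = k - c₂) :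
    (X - C k) * (X - C s) * (X + C s) * (X + C k) =
      C (k * c₂) * ((X - C (aInt b c 3)) * distPoly b c 3 - C (b 2 : ℝ) * distPoly b c 2) := by
  refine Polynomial.funext fun x => ?_
  simp only [aInt, hb, h.b_zero, h.b_two, h.c_three, eval_mul, eval_sub, eval_add, eval_C, eval_X,
    h.eval_distPoly_two, h.eval_distPoly_three]
  field_simp
  push_cast
  linear_combination (k ^ 2 - x ^ 2) * hs

theorem spectrum_adjMatrix {W : Type*} [Fintype W] [DecidableEq W] {G : SimpleGraph W}
    [DecidableRel G.Adj] (harray : IsBipartiteArrayThree b c k c₂) (h : IsDRG G 3 b c) {s : ℝ}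
    (hs : s ^ 2 = k - c₂) : spectrum ℝ (G.adjMatrix ℝ) = {k, s, -s, -k} := by
  obtain ⟨x, y, hxy⟩ := h.exists_dist_eq
  have hk : k ≠ 0 := by
    rw [← harray.b_zero, Nat.cast_ne_zero]
    exact (h.b_pos (by lia)).ne'
  have hc : c₂ ≠ 0 := by
    rw [← harray.c_two, Nat.cast_ne_zero]
    exact (h.c_succ_pos (by lia)).ne'
  ext μ
  rw [mem_spectrum_adjMatrix_iff_isRoot (h.connected x y)
    (p := (X - C k) * (X - C s) * (X + C s) * (X + C k)) (by monicity!)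
    (by rw [hxy]; compute_degree!)]
  · simp [sub_eq_zero, add_eq_zero_iff_eq_neg, or_assoc]
  · rw [harray.prod_X_sub_C_eq h.b_diam hk hc hs, map_mul,
      h.aeval_distPoly_recurrence_eq_zero, mul_zero]

end IsBipartiteArrayThree

end BipartiteDiameterThree

/-- a bipartite distance-regular graph of diameter 3 with intersection
array `{k, k−1, k−c₂; 1, c₂, k}` and `q > 0` or `q ≤ −1` has exactly three distinct
`q`-distance eigenvalues if and only if `q = (k + θ)/c₂ − 1` for some adjacency eigenvalue
`θ ∈ {√(k−c₂), −√(k−c₂), −k}`. -/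
theorem stmt12 (G : SimpleGraph V) (k c₂ : ℕ) (b c : ℕ → ℕ) (hG : IsDRG G 3 b c)
    (hbip : IsBipartiteGraph G)
    (hb0 : b 0 = k) (hb1 : b 1 = k - 1) (hb2 : b 2 = k - c₂)
    (hc2 : c 2 = c₂) (hc3 : c 3 = k)
    (q : ℝ) (hq : 0 < q ∨ q ≤ -1) :
    (spectrum ℝ (qDist G 3 q)).ncard = 3 ↔
      ∃ θ ∈ ({Real.sqrt ((k : ℝ) - (c₂ : ℝ)), -Real.sqrt ((k : ℝ) - (c₂ : ℝ)),
              -(k : ℝ)} : Set ℝ),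
        q = ((k : ℝ) + θ) / (c₂ : ℝ) - 1 := by
  classical
  have hb2_pos := hG.b_pos (show 2 < 3 by lia)
  have hc2_pos := hG.c_succ_pos (show 1 < 3 by lia)
  have hc : (1 : ℝ) ≤ c₂ := by exact_mod_cast (show 1 ≤ c₂ by lia)
  have hck : (c₂ : ℝ) + 1 ≤ k := by exact_mod_cast (show c₂ + 1 ≤ k by lia)
  have hs : √((k : ℝ) - c₂) ^ 2 = k - c₂ := Real.sq_sqrt (by linarith)
  have harray : IsBipartiteArrayThree b c k c₂ :=
    { b_zero := by rw [hb0]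
      b_one := by rw [hb1, Nat.cast_pred (by lia)]
      b_two := by rw [hb2, Nat.cast_sub (by lia)]
      c_one := by rw [hG.c_one, Nat.cast_one]
      c_two := by rw [hc2]
      c_three := by rw [hc3] }
  rw [hG.spectrum_qDist, harray.spectrum_adjMatrix hG hs,
    Set.image_congr fun x _ => harray.eval_qDistPoly q x]
  exact ncard_qDistEigenvalue_image_eq_three_iff hc hck hq hs
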